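/- Let n ≥ 2, let 1 ≤ i ≤ n, and let 0 ≤ k ≤ n−2. The number of arithmetical d-structures (d_1, …, d_n) on the path P_n with d_i = n−k−1 equals the ballot number B(n−2, k). -/

import Mathlib

/-!
Geometrically, arithmetical structures on `P_n` are triangulations of an `(n + 1)`-gon with vertices
`0, …, n`, where `d_i` counts the triangles at the vertex `i`; the argument is an arithmetic version of
this picture.

*Rotation.* The recurrence `r_{j+1} = d_j r_j - r_{j-1}` forces `r_1 = 1`, so `r` is a sequence of
continuants. Let `s` be the solution of the same recurrence with `s_1 = 0`, `s_2 = 1`. The Wronskian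
identity `s_{j+1} r_j - s_j r_{j+1} = 1` shows that `s` is positive and `r_n = s_{n+1} = 1`, hence with
`d_0 = s_n` the vector `(d_2, …, d_n, d_0)` is again a structure. This rotation is a bijection, so all
`d_i`, and the hidden entry `d_0`, have the same distribution.

*The hidden entry.* Dividing the Wronskian identity by `r_j r_{j+1}` and summing gives
`d_0 = ∑ 1 / (r_j r_{j+1})`. Deleting an entry of `r` that is the sum of its neighbours does not change
this sum, and such deletions show that `d_0` is the number of ones among `r_2, …, r_n`
(`hidden_eq_count`).

*Counting.* At an entry `1` the divisibility condition on `r` is vacuous, so a vector `r` with `m` ones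
besides `r_1` is a sequence of `m` independent primitive pieces, and the number of such vectors is a
coefficient of `S ^ m`, where `S` counts primitive vectors. Let `A` count all vectors, so `A = 1 + S A`.
A primitive vector has `d_0 = 1`; by rotation such vectors are as numerous as those with `d_1 = 1`, that
is `r_1 = r_2 = 1`, and these are an arbitrary vector preceded by a `1`. Thus `S = X A`, so `S = X + S²`
and `S ^ (m + 1) = X S ^ m + S ^ (m + 2)`, which is the recursion of the ballot numbers.
-/

def IsArithPath (n : ℕ) (d r : Fin n → ℕ) : Prop :=
  (∀ i, 0 < d i) ∧ (∀ i, 0 < r i) ∧ Finset.univ.gcd r = 1 ∧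
  ∀ i : Fin n, d i * r i =
    (if 0 < i.val then r ⟨i.val - 1, Nat.lt_of_le_of_lt (Nat.sub_le _ _) i.isLt⟩ else 0) +
    (if h : i.val + 1 < n then r ⟨i.val + 1, h⟩ else 0)

/-- The ballot number `B(k, ℓ) = ((k - ℓ + 1)/(k + 1)) · C(k + ℓ, k)`. -/
def ballot (k l : ℕ) : ℕ := (k + 1 - l) * (k + l).choose k / (k + 1)

namespace ArithPath

/-! ### Continuants and cyclic rotation -/

/-- The continuant sequence of `e`: the solution of `K (j + 2) = e j * K (j + 1) - K j` with `K 0 = 0`,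
`K 1 = 1`. When `e` lists `d_1, d_2, …` (indexed from `0`), `cont e j` is `r_j`. -/
def cont (e : ℕ → ℤ) : ℕ → ℤ
  | 0 => 0
  | 1 => 1
  | (j + 2) => e j * cont e (j + 1) - cont e j

/-- The sequence `e` with its first entry dropped. -/
def shift (e : ℕ → ℤ) : ℕ → ℤ := fun j => e (j + 1)

/-- Arithmetical `d`-structures on `P_n`, encoded as integer sequences that vanish from index `n` on and
whose continuants are positive at `1, …, n` and zero at `n + 1`. -/
def Seqs (n : ℕ) : Set (ℕ → ℤ) :=
  {e | (∀ j < n, 0 < cont e (j + 1)) ∧ cont e (n + 1) = 0 ∧ ∀ j, n ≤ j → e j = 0}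

/-- The entry `d_0` attached to the extra vertex `0` that closes `d_1, …, d_n` up to a cycle of length
`n + 1`. -/
def hidden (n : ℕ) (e : ℕ → ℤ) : ℤ := cont (shift e) (n - 1)

/-- The rotated structure `(d_2, …, d_n, d_0)`. -/
def rotate (n : ℕ) (e : ℕ → ℤ) : ℕ → ℤ := fun j =>
  if j + 1 < n then e (j + 1) else if j + 1 = n then hidden n e else 0

lemma cont_congr {e f : ℕ → ℤ} : ∀ j, (∀ i, i + 2 ≤ j → e i = f i) → cont e j = cont f j
  | 0, _ => rfl
  | 1, _ => rfl
  | (j + 2), h => by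
    rw [cont, cont, cont_congr (j + 1) (fun i hi => h i (by omega)),
      cont_congr j (fun i hi => h i (by omega)), h j le_rfl]

lemma cont_wronskian (e : ℕ → ℤ) (j : ℕ) :
    cont (shift e) (j + 1) * cont e (j + 1) - cont (shift e) j * cont e (j + 2) = 1 := by
  induction j with
  | zero => simp [cont]
  | succ j ih =>
    have h1 : cont (shift e) (j + 2) = e (j + 1) * cont (shift e) (j + 1) - cont (shift e) j := rfl
    have h2 : cont e (j + 3) = e (j + 1) * cont e (j + 2) - cont e (j + 1) := rfl
    rw [show j + 1 + 1 = j + 2 from rfl, show j + 1 + 2 = j + 3 from rfl, h1, h2]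
    linear_combination ih

/-- Expansion of a continuant along its first entry. -/
lemma cont_left (e : ℕ → ℤ) : ∀ j,
    cont e (j + 2) = e 0 * cont (shift e) (j + 1) - cont (shift (shift e)) j
  | 0 => by simp [cont]
  | 1 => by simp [cont, shift]; ring
  | (j + 2) => by
    have h1 : cont e (j + 2 + 2) = e (j + 2) * cont e (j + 1 + 2) - cont e (j + 2) := rfl
    have h2 : cont (shift e) (j + 2 + 1) =
        e (j + 2) * cont (shift e) (j + 1 + 1) - cont (shift e) (j + 1) := rfl
    have h3 : cont (shift (shift e)) (j + 2) =
        e (j + 2) * cont (shift (shift e)) (j + 1) - cont (shift (shift e)) j := rfl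
    rw [h1, h2, h3, cont_left e (j + 1), cont_left e j]
    ring

/-- By the Wronskian identity at the end of the path, the last continuants are factors of `1`. -/
lemma cont_last_eq_one {n : ℕ} {e : ℕ → ℤ} (he : e ∈ Seqs (n + 1)) :
    cont e (n + 1) = 1 ∧ cont (shift e) (n + 1) = 1 := by
  obtain ⟨h1, h2, -⟩ := he
  have h := cont_wronskian e n
  rw [show n + 2 = n + 1 + 1 from rfl, h2] at h
  have hp := h1 n (by omega)
  have h' : cont e (n + 1) * cont (shift e) (n + 1) = 1 := by linarith
  have h3 := Int.eq_one_or_neg_one_of_mul_eq_one h'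
  have h4 : cont e (n + 1) = 1 := by omega
  rw [h4] at h'
  exact ⟨h4, by linarith⟩

/-- The continuants of the shifted sequence are positive: inductively, the Wronskian identity gives
`s_{j+1} r_j = 1 + s_j r_{j+1} > 0`. -/
lemma cont_shift_pos {n : ℕ} {e : ℕ → ℤ} (he : e ∈ Seqs (n + 1)) (j : ℕ) (hj : j ≤ n) :
    0 < cont (shift e) (j + 1) := by
  induction j with
  | zero => simp [cont]
  | succ j ih =>
    have h := cont_wronskian e (j + 1)
    have h1 := ih (by omega)
    have h2 := he.1 (j + 1) (by omega)
    have h3 : 0 ≤ cont e (j + 1 + 2) := by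
      rcases Nat.lt_or_ge (j + 2) (n + 1) with h | h
      · exact (he.1 (j + 2) h).le
      · have : j + 1 = n := by omega
        subst this
        exact he.2.1.ge
    have h4 : 0 < cont (shift e) (j + 1 + 1) * cont e (j + 1 + 1) := by nlinarith
    exact pos_of_mul_pos_left h4 h2.le

lemma last_entry_eq {n : ℕ} {e : ℕ → ℤ} (he : e ∈ Seqs (n + 1)) : e n = cont e n := by
  have h := he.2.1
  rw [show n + 1 + 1 = n + 2 from rfl, cont, (cont_last_eq_one he).1] at h
  linarith

lemma first_entry_eq {n : ℕ} {e : ℕ → ℤ} (he : e ∈ Seqs (n + 1)) : e 0 = cont (shift (shift e)) n := by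
  have h := he.2.1
  rw [show n + 1 + 1 = n + 2 from rfl, cont_left, (cont_last_eq_one he).2] at h
  linarith

lemma cont_rotate {n : ℕ} (e : ℕ → ℤ) (j : ℕ) (hj : j ≤ n + 1) :
    cont (rotate (n + 1) e) j = cont (shift e) j :=
  cont_congr j fun i hi => by
    simp only [rotate, shift]
    rw [if_pos (by omega)]

lemma rotate_mem {n : ℕ} {e : ℕ → ℤ} (he : e ∈ Seqs (n + 1)) : rotate (n + 1) e ∈ Seqs (n + 1) := by
  refine ⟨fun j hj => ?_, ?_, fun j hj => ?_⟩
  · rw [cont_rotate e _ (by omega)]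
    exact cont_shift_pos he j (by omega)
  · rw [show n + 1 + 1 = n + 2 from rfl, cont, cont_rotate e _ le_rfl, cont_rotate e _ (by omega),
      (cont_last_eq_one he).2]
    simp [rotate, hidden]
  · simp only [rotate]
    rw [if_neg (by omega), if_neg (by omega)]

/-- The entries `d_2, …, d_n` determine `d_1`, by `first_entry_eq`. -/
lemma rotate_injOn (n : ℕ) : Set.InjOn (rotate (n + 1)) (Seqs (n + 1)) := by
  intro e he f hf h
  have h1 : ∀ j, e (j + 1) = f (j + 1) := by
    intro j
    rcases Nat.lt_or_ge (j + 1) (n + 1) with hj | hj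
    · have := congrFun h j
      simpa [rotate, hj] using this
    · rw [he.2.2 _ hj, hf.2.2 _ hj]
  have h2 : shift e = shift f := funext h1
  funext j
  cases j with
  | zero => rw [first_entry_eq he, first_entry_eq hf, h2]
  | succ j => exact h1 j

/-- The preimage of `x` is `(h, x_0, …, x_{n-1})` with `h = cont (shift x) n`; the last entry of its
rotation is right because the other entries determine it. -/
lemma rotate_surjOn (n : ℕ) : Set.SurjOn (rotate (n + 1)) (Seqs (n + 1)) (Seqs (n + 1)) := by
  intro x hx
  let e : ℕ → ℤ := fun j => if j = 0 then cont (shift x) n else if j ≤ n then x (j - 1) else 0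
  have hsh : ∀ j, j < n → shift e j = x j := by
    intro j hj
    simp only [e, shift]
    rw [if_neg (by omega), if_pos (by omega)]
    rfl
  have hK1 : ∀ j, j ≤ n + 1 → cont (shift e) j = cont x j := fun j hj =>
    cont_congr j fun i hi => hsh i (by omega)
  have hK2 : ∀ j, j ≤ n → cont (shift (shift e)) j = cont (shift x) j := fun j hj =>
    cont_congr j fun i hi => hsh (i + 1) (by omega)
  have hKe : ∀ j, j ≤ n → cont e (j + 2) = cont (shift x) n * cont x (j + 1) - cont (shift x) j := by
    intro j hj
    rw [cont_left, hK1 _ (by omega), hK2 _ hj]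
    simp [e]
  have h0 : cont e (n + 2) = 0 := by rw [hKe n le_rfl, (cont_last_eq_one hx).1]; ring
  -- Downward induction on `j`: the Wronskian identity reads `q_j r_{j+1} = 1 + q_{j+1} r_j` for
  -- `q_j = cont e (j + 1)` and `r_j = cont x j`, and `q_n` is positive.
  have hpos : ∀ i j, i + j + 1 = n → 0 < cont e (j + 2) := by
    intro i
    induction i with
    | zero =>
      intro j hj
      obtain rfl : n = j + 1 := by omega
      rw [hKe j (by omega)]
      have hw := cont_wronskian x j
      rw [(cont_last_eq_one hx).1] at hw
      linarith
    | succ i ih =>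
      intro j hj
      have h1 := ih (j + 1) (by omega)
      have hw := cont_wronskian x j
      rw [hKe _ (by omega)] at h1 ⊢
      have p1 := hx.1 j (by omega)
      have p2 := hx.1 (j + 1) (by omega)
      rw [show j + 1 + 1 = j + 2 from rfl] at *
      have : 0 < (cont (shift x) n * cont x (j + 1) - cont (shift x) j) * cont x (j + 2) := by nlinarith
      exact pos_of_mul_pos_left this p2.le
  have heE : e ∈ Seqs (n + 1) := by
    refine ⟨fun j hj => ?_, h0, fun j hj => ?_⟩
    · cases j with
      | zero => simp [cont]
      | succ j => exact hpos (n - 1 - j) j (by omega)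
    · simp only [e]
      rw [if_neg (by omega), if_neg (by omega)]
  refine ⟨e, heE, ?_⟩
  have hr := rotate_mem heE
  have hlt : ∀ j, j < n → rotate (n + 1) e j = x j := by
    intro j hj
    simp only [rotate]
    rw [if_pos (by omega)]
    exact hsh j hj
  funext j
  rcases lt_trichotomy j n with hj | rfl | hj
  · exact hlt j hj
  · rw [last_entry_eq hr, last_entry_eq hx]
    exact cont_congr _ fun i hi => hlt i (by omega)
  · rw [hr.2.2 j hj, hx.2.2 j hj]

/-- Rotation as a permutation of the structures on `P_{n+1}`. -/
noncomputable def rotateEquiv (n : ℕ) : Seqs (n + 1) ≃ Seqs (n + 1) :=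
  Set.BijOn.equiv (rotate (n + 1)) ⟨fun _ h => rotate_mem h, rotate_injOn n, rotate_surjOn n⟩

lemma rotateEquiv_apply (n : ℕ) (e : Seqs (n + 1)) : (rotateEquiv n e).1 = rotate (n + 1) e.1 := rfl

/-- Every position `j`, the hidden one included, takes the value `m` equally often: rotation moves the
entry at `j + 1` to `j` and the hidden entry to the last position. -/
lemma nonempty_hidden_equiv_entry (n : ℕ) (m : ℤ) (j : ℕ) (hj : j ≤ n) :
    Nonempty ({e : Seqs (n + 1) // hidden (n + 1) e.1 = m} ≃ {e : Seqs (n + 1) // e.1 j = m}) := by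
  induction hj using Nat.decreasingInduction with
  | of_succ j hj ih =>
    obtain ⟨f⟩ := ih
    refine ⟨f.trans ((rotateEquiv n).subtypeEquiv fun e => ?_)⟩
    rw [rotateEquiv_apply]
    simp [rotate, hj]
  | self =>
    refine ⟨(rotateEquiv n).subtypeEquiv fun e => ?_⟩
    rw [rotateEquiv_apply]
    simp [rotate]

/-! ### The vectors `r` as lists -/

/-- `IsRTail a b l` says that `l` can follow two consecutive entries `a, b` of a vector `r` of an
arithmetical structure: the entries of `l` are positive, `b` and each entry of `l` except the last divide
the sum of their neighbours, and the last entry of `b :: l` is `1`. The vectors `r` are the lists `1 :: l`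
with `IsRTail 0 1 l`; the value of `a` is irrelevant when `b = 1`. -/
def IsRTail : ℕ → ℕ → List ℕ → Prop
  | _, b, [] => b = 1
  | a, b, c :: l => 0 < c ∧ b ∣ a + c ∧ IsRTail b c l

/-- The sum of `1 / (x * y)` over consecutive entries `x, y` of `b :: l`. -/
def weight : ℕ → List ℕ → ℚ
  | _, [] => 0
  | b, c :: l => 1 / ((b : ℚ) * c) + weight c l

lemma isRTail_one_iff (a a' : ℕ) (l : List ℕ) : IsRTail a 1 l ↔ IsRTail a' 1 l := by
  cases l <;> simp [IsRTail]

lemma isRTail_append (a b : ℕ) (p q : List ℕ) :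
    IsRTail a b (p ++ 1 :: q) ↔ IsRTail a b (p ++ [1]) ∧ IsRTail 0 1 q := by
  induction p generalizing a b with
  | nil => simp [IsRTail, isRTail_one_iff b 0]
  | cons c p ih => simp [IsRTail, ih, and_assoc]

lemma exists_eq_append_one {a b : ℕ} {l : List ℕ} (h : IsRTail a b l) (hl : l ≠ []) :
    ∃ p, l = p ++ [1] := by
  induction l generalizing a b with
  | nil => exact absurd rfl hl
  | cons c l ih =>
    cases l with
    | nil => exact ⟨[], by simpa [IsRTail] using h.2.2⟩
    | cons c' l =>
      obtain ⟨p, hp⟩ := ih h.2.2 (by simp)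
      exact ⟨c :: p, by rw [hp]; rfl⟩

lemma isRTail_add_self (a c : ℕ) (l : List ℕ) : IsRTail (a + c) c l ↔ IsRTail a c l := by
  cases l with
  | nil => rfl
  | cons d l =>
    have : a + c + d = (a + d) + c := by ring
    simp [IsRTail, this]

/-- If `a < b`, then at the first place after `b` where the sequence stops increasing, an entry equals the
sum of its neighbours. Deleting it removes no `1` and keeps the weight, since
`1 / (a * (a + c)) + 1 / ((a + c) * c) = 1 / (a * c)`. -/
lemma exists_ear {x a b : ℕ} {l : List ℕ} (ha : 0 < a) (hab : a < b) (h : IsRTail x a (b :: l)) :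
    ∃ l' : List ℕ, l'.length = l.length ∧ IsRTail x a l' ∧ l'.count 1 = (b :: l).count 1 ∧
      weight a l' = weight a (b :: l) := by
  induction l generalizing x a b with
  | nil =>
    have : b = 1 := h.2.2
    omega
  | cons c l ih =>
    obtain ⟨hb, hx, hok⟩ := h
    rcases Nat.lt_or_ge b c with hbc | hcb
    · obtain ⟨l', h1, h2, h3, h4⟩ := ih hb hbc hok
      refine ⟨b :: l', by simp [h1], ⟨hb, hx, h2⟩, ?_, ?_⟩
      · rw [List.count_cons, h3, ← List.count_cons]
      · rw [weight, h4]
        rfl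
    · obtain ⟨hc, hdvd, hok⟩ := hok
      obtain ⟨t, ht⟩ := hdvd
      have htt : t = 1 := by
        have h1 : t ≠ 0 := by rintro rfl; omega
        have h2 : t < 2 := by
          by_contra hcon
          have : b * 2 ≤ b * t := Nat.mul_le_mul_left b (by omega)
          omega
        omega
      have hbe : b = a + c := by rw [ht, htt, mul_one]
      subst hbe
      refine ⟨c :: l, rfl, ⟨hc, ?_, (isRTail_add_self a c l).1 hok⟩, ?_, ?_⟩
      · have : x + (a + c) = (x + c) + a := by ring
        rwa [this, Nat.dvd_add_self_right] at hx
      · exact (List.count_cons_of_ne (by omega : a + c ≠ 1)).symm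
      · have ha' : (a : ℚ) ≠ 0 := by positivity
        have hc' : (c : ℚ) ≠ 0 := by positivity
        have hac : (a : ℚ) + c ≠ 0 := by positivity
        simp only [weight]
        push_cast
        field_simp
        ring

/-- Deleting entries that are sums of their neighbours, and leading ones, reduces to the empty list. -/
lemma weight_eq_count (N : ℕ) : ∀ l : List ℕ, l.length = N → IsRTail 0 1 l → weight 1 l = l.count 1 := by
  induction N with
  | zero =>
    intro l hl _
    rw [List.length_eq_zero_iff.1 hl]
    simp [weight]
  | succ N ih =>
    intro l hl h
    cases l with
    | nil => simp at hl
    | cons b t =>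
      have ht : t.length = N := by simpa using hl
      rcases Nat.lt_or_ge 1 b with hb | hb
      · obtain ⟨l', h1, h2, h3, h4⟩ := exists_ear one_pos hb h
        rw [← h4, ← h3]
        exact ih l' (h1.trans ht) h2
      · have hb1 : b = 1 := by have := h.1; omega
        subst hb1
        have := ih t ht ((isRTail_one_iff _ _ _).1 h.2.2)
        rw [weight, this, List.count_cons_self]
        push_cast
        ring

lemma isRTail_iff_getD (a b : ℕ) (l : List ℕ) :
    IsRTail a b l ↔ (∀ j < l.length, 0 < (a :: b :: l).getD (j + 2) 0 ∧
        (a :: b :: l).getD (j + 1) 0 ∣ (a :: b :: l).getD j 0 + (a :: b :: l).getD (j + 2) 0) ∧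
      (a :: b :: l).getD (l.length + 1) 0 = 1 := by
  induction l generalizing a b with
  | nil => simp [IsRTail]
  | cons c l ih =>
    rw [List.length_cons, Nat.forall_lt_succ_left, IsRTail, ih]
    simp only [List.getD_cons_succ, List.getD_cons_zero, zero_add]
    tauto

lemma weight_eq_sum (b : ℕ) (l : List ℕ) :
    weight b l = ∑ t ∈ Finset.range l.length,
      1 / (((b :: l).getD t 0 : ℚ) * ((b :: l).getD (t + 1) 0 : ℕ)) := by
  induction l generalizing b with
  | nil => simp [weight]
  | cons c l ih =>
    rw [List.length_cons, Finset.sum_range_succ', weight, ih, add_comm]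
    simp

/-! ### Splitting at the ones -/

/-- The vectors `r` of the structures on `P_{N+1}`, with the initial entry `1` omitted. -/
abbrev RTail (N : ℕ) := {l : List ℕ // IsRTail 0 1 l ∧ l.length = N}

/-- Concatenation of a list whose only `1` is its last entry with an arbitrary list. By `glue_bijective`,
each nonempty `r`-list is obtained once, by cutting after its first `1`. The predicate `p` restricts the
number of ones in the second part. -/
def glue (N : ℕ) (p : ℕ → Prop)
    (x : Σ ij : Finset.HasAntidiagonal.antidiagonal N, {l : RTail ij.1.1 // l.1.count 1 = 1} ×
        {l : RTail ij.1.2 // p (l.1.count 1)}) :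
    {l : RTail N // ∃ k, l.1.count 1 = k + 1 ∧ p k} := by
  refine ⟨⟨x.2.1.1.1 ++ x.2.2.1.1, ?_, ?_⟩, x.2.2.1.1.count 1, ?_, x.2.2.2⟩
  · obtain ⟨ij, ⟨⟨a, ha, hal⟩, ha1⟩, ⟨⟨b, hb, hbl⟩, hbp⟩⟩ := x
    obtain ⟨p, rfl⟩ := exists_eq_append_one ha (by rintro rfl; simp at ha1)
    simpa using (isRTail_append 0 1 p b).2 ⟨ha, hb⟩
  · rw [List.length_append, x.2.1.1.2.2, x.2.2.1.2.2]
    exact Finset.HasAntidiagonal.mem_antidiagonal.1 x.1.2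
  · have := x.2.1.2
    simp only [List.count_append]
    omega

lemma glue_bijective (N : ℕ) (p : ℕ → Prop) : Function.Bijective (glue N p) := by
  constructor
  · rintro ⟨⟨⟨i, j⟩, hij⟩, ⟨⟨a, ha, hal⟩, ha1⟩, ⟨⟨b, hb, hbl⟩, hbp⟩⟩
      ⟨⟨⟨i', j'⟩, hij'⟩, ⟨⟨a', ha', hal'⟩, ha1'⟩, ⟨⟨b', hb', hbl'⟩, hbp'⟩⟩ h
    simp only [glue, Subtype.mk.injEq] at ha1 ha1' h
    -- A list with a single `1`, in last position, has no proper prefix containing a `1`.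
    have key : ∀ u v w : List ℕ, IsRTail 0 1 v → v = u ++ w → u.count 1 = 1 → v.count 1 = 1 →
        w = [] := by
      intro u v w hv hvw hu hv1
      by_contra hw
      obtain ⟨q, hq⟩ := exists_eq_append_one hv (by simp [hvw, hw])
      have hlast : v.getLast? = some 1 := by simp [hq]
      have h1 : 1 ∈ w := by
        rw [hvw, List.getLast?_append_of_ne_nil _ hw] at hlast
        exact List.mem_of_getLast? hlast
      have h2 := List.count_pos_iff.2 h1
      rw [hvw, List.count_append] at hv1
      omega
    have haa : a = a' ∧ b = b' := by
      rcases List.append_eq_append_iff.1 h with ⟨w, hw1, hw2⟩ | ⟨w, hw1, hw2⟩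
      · have := key a a' w ha' hw1 ha1 ha1'
        subst this
        simp_all
      · have := key a' a w ha hw1 ha1' ha1
        subst this
        simp_all
    obtain ⟨rfl, rfl⟩ := haa
    dsimp only at hal hal' hbl hbl'
    subst hal hbl hal' hbl'
    rfl
  · rintro ⟨⟨l, hl, hlN⟩, k, hk, hpk⟩
    dsimp only at hk
    have hmem : 1 ∈ l := List.count_pos_iff.1 (by omega)
    obtain ⟨s, t, rfl, hs⟩ := List.eq_append_cons_of_mem hmem
    obtain ⟨h1, h2⟩ := (isRTail_append 0 1 s t).1 hl
    have hs0 : s.count 1 = 0 := List.count_eq_zero.2 hs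
    have htk : t.count 1 = k := by simp [hs0] at hk; omega
    refine ⟨⟨⟨((s ++ [1]).length, t.length), ?_⟩, ⟨⟨s ++ [1], h1, rfl⟩, ?_⟩, ⟨⟨t, h2, rfl⟩, ?_⟩⟩, ?_⟩
    · rw [Finset.HasAntidiagonal.mem_antidiagonal, ← hlN]; simp; ring
    · simp [hs0]
    · simpa [htk] using hpk
    · simp [glue]

/-! ### The correspondence between `d` and `r` -/

/-- The entries `r_2, …, r_{N+1}` of the vector `r` belonging to `e`. -/
def toRTail (N : ℕ) (e : ℕ → ℤ) : List ℕ := (List.range N).map fun j => (cont e (j + 2)).toNat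

lemma toRTail_getD {N : ℕ} {e : ℕ → ℤ} (he : e ∈ Seqs (N + 1)) (j : ℕ) (hj : j ≤ N + 2) :
    (((0 :: 1 :: toRTail N e).getD j 0 : ℕ) : ℤ) = cont e j := by
  match j with
  | 0 => simp [cont]
  | 1 => simp [cont]
  | (j + 2) =>
    rcases Nat.lt_or_ge j N with h | h
    · have := he.1 (j + 1) (by omega)
      simp only [toRTail, List.getD_cons_succ]
      rw [List.getD_eq_getElem _ _ (by simpa using h)]
      simp only [List.getElem_map, List.getElem_range]
      exact Int.toNat_of_nonneg this.le
    · obtain rfl : j = N := by omega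
      have := he.2.1
      simp only [toRTail, List.getD_cons_succ]
      rw [List.getD_eq_default _ _ (by simp)]
      exact this.symm

lemma toRTail_length (N : ℕ) (e : ℕ → ℤ) : (toRTail N e).length = N := by simp [toRTail]

lemma toRTail_isRTail {N : ℕ} {e : ℕ → ℤ} (he : e ∈ Seqs (N + 1)) : IsRTail 0 1 (toRTail N e) := by
  rw [isRTail_iff_getD, toRTail_length]
  refine ⟨fun j hj => ⟨?_, ?_⟩, ?_⟩
  · have h := toRTail_getD he (j + 2) (by omega)
    have := he.1 (j + 1) (by omega)
    rw [show j + 1 + 1 = j + 2 from rfl] at this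
    omega
  · rw [← Int.natCast_dvd_natCast]
    push_cast
    rw [toRTail_getD he j (by omega), toRTail_getD he (j + 1) (by omega),
      toRTail_getD he (j + 2) (by omega), cont]
    exact ⟨e j, by ring⟩
  · have h := toRTail_getD he (N + 1) (by omega)
    rw [(cont_last_eq_one he).1] at h
    exact_mod_cast h

/-- The entries `d_j = (r_{j-1} + r_{j+1}) / r_j` recovered from `r = 1 :: l`, with `r_0 = 0` and zeros
beyond the end; the natural-number division is exact when `IsRTail 0 1 l`. -/
def ofRTail (l : List ℕ) : ℕ → ℤ := fun j =>
  if j ≤ l.length then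
    ((((0 :: 1 :: l).getD j 0 + (0 :: 1 :: l).getD (j + 2) 0) / (0 :: 1 :: l).getD (j + 1) 0 : ℕ) : ℤ)
  else 0

lemma isRTail_getD_pos {l : List ℕ} (hl : IsRTail 0 1 l) (j : ℕ) (hj : j ≤ l.length) :
    0 < (0 :: 1 :: l).getD (j + 1) 0 := by
  cases j with
  | zero => simp
  | succ j => exact (((isRTail_iff_getD 0 1 l).1 hl).1 j hj).1

lemma cont_ofRTail {l : List ℕ} (hl : IsRTail 0 1 l) : ∀ j, j ≤ l.length + 2 →
    cont (ofRTail l) j = (((0 :: 1 :: l).getD j 0 : ℕ) : ℤ)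
  | 0, _ => by simp [cont]
  | 1, _ => by simp [cont]
  | (j + 2), hj => by
    have hdvd : (0 :: 1 :: l).getD (j + 1) 0 ∣
        (0 :: 1 :: l).getD j 0 + (0 :: 1 :: l).getD (j + 2) 0 := by
      rcases Nat.lt_or_ge j l.length with h | h
      · exact (((isRTail_iff_getD 0 1 l).1 hl).1 j h).2
      · obtain rfl : j = l.length := by omega
        rw [((isRTail_iff_getD 0 1 l).1 hl).2]
        exact one_dvd _
    rw [cont, cont_ofRTail hl (j + 1) (by omega), cont_ofRTail hl j (by omega), ofRTail,
      if_pos (by omega)]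
    rw [← Nat.cast_mul, Nat.div_mul_cancel hdvd]
    push_cast
    ring

lemma ofRTail_mem {l : List ℕ} (hl : IsRTail 0 1 l) : ofRTail l ∈ Seqs (l.length + 1) := by
  refine ⟨fun j hj => ?_, ?_, fun j hj => ?_⟩
  · rw [cont_ofRTail hl _ (by omega)]
    exact_mod_cast isRTail_getD_pos hl j (by omega)
  · rw [cont_ofRTail hl _ (by omega)]
    simp
  · rw [ofRTail, if_neg (by omega)]

/-- A structure is determined by either of its vectors `d` and `r`. -/
noncomputable def listEquiv (N : ℕ) : Seqs (N + 1) ≃ RTail N :=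
  Equiv.ofBijective (fun e => ⟨toRTail N e.1, toRTail_isRTail e.2, toRTail_length N e.1⟩) <| by
    constructor
    · rintro ⟨e, he⟩ ⟨f, hf⟩ h
      have h1 : toRTail N e = toRTail N f := congrArg Subtype.val h
      have hK : ∀ j, j ≤ N + 2 → cont e j = cont f j := by
        intro j hj
        rw [← toRTail_getD he j hj, ← toRTail_getD hf j hj, h1]
      apply Subtype.ext
      funext j
      rcases Nat.lt_or_ge j (N + 1) with hj | hj
      · have h2 := hK (j + 2) (by omega)
        rw [cont, cont, hK j (by omega), hK (j + 1) (by omega)] at h2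
        have h3 := hf.1 j hj
        have h4 : e j * cont f (j + 1) = f j * cont f (j + 1) := by linarith
        exact mul_right_cancel₀ h3.ne' h4
      · exact (he.2.2 j hj).trans (hf.2.2 j hj).symm
    · rintro ⟨l, hl, rfl⟩
      refine ⟨⟨ofRTail l, ofRTail_mem hl⟩, Subtype.ext ?_⟩
      refine List.ext_getElem (toRTail_length _ _) fun j h1 h2 => ?_
      simp only [toRTail, List.getElem_map, List.getElem_range]
      have h3 : j < l.length := h2
      rw [cont_ofRTail hl _ (by omega), Int.toNat_natCast]
      simp only [List.getD_cons_succ]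
      exact List.getD_eq_getElem _ _ h2

lemma listEquiv_apply (N : ℕ) (e : Seqs (N + 1)) : (listEquiv N e).1 = toRTail N e.1 := rfl

/-- The Wronskian identity, divided by `r_j r_{j+1}` and summed. -/
lemma hidden_sum {N : ℕ} {e : ℕ → ℤ} (he : e ∈ Seqs (N + 1)) (j : ℕ) (hj : j ≤ N) :
    (cont (shift e) j : ℚ) / cont e (j + 1) =
      ∑ t ∈ Finset.range j, 1 / ((cont e (t + 1) : ℚ) * cont e (t + 2)) := by
  induction j with
  | zero => simp [cont]
  | succ j ih =>
    have h1 : (0 : ℚ) < cont e (j + 1) := by exact_mod_cast he.1 j (by omega)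
    have h2 : (0 : ℚ) < cont e (j + 2) := by exact_mod_cast he.1 (j + 1) (by omega)
    have hw : (cont (shift e) (j + 1) * cont e (j + 1) - cont (shift e) j * cont e (j + 2) : ℚ) = 1 := by
      exact_mod_cast cont_wronskian e j
    rw [Finset.sum_range_succ, ← ih (by omega), show j + 1 + 1 = j + 2 from rfl]
    field_simp
    linarith

/-- The hidden entry `d_0` is the number of ones among `r_2, …, r_n`. -/
lemma hidden_eq_count {N : ℕ} {e : ℕ → ℤ} (he : e ∈ Seqs (N + 1)) :
    hidden (N + 1) e = (toRTail N e).count 1 := by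
  have h := hidden_sum he N le_rfl
  rw [(cont_last_eq_one he).1] at h
  have h2 := weight_eq_sum 1 (toRTail N e)
  rw [weight_eq_count N _ (toRTail_length N e) (toRTail_isRTail he), toRTail_length] at h2
  have h3 : ((hidden (N + 1) e : ℤ) : ℚ) = (((toRTail N e).count 1 : ℕ) : ℚ) := by
    rw [h2, hidden, Nat.add_sub_cancel]
    simp only [Int.cast_one, div_one] at h
    rw [h]
    refine Finset.sum_congr rfl fun t ht => ?_
    have ht := Finset.mem_range.1 ht
    rw [← toRTail_getD he (t + 1) (by omega), ← toRTail_getD he (t + 2) (by omega)]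
    simp only [List.getD_cons_succ, Int.cast_natCast]
  exact_mod_cast h3

/-! ### The generating function -/

/-- The number of vectors `r` on `P_{N+1}` with exactly `m` ones besides `r_1`. -/
noncomputable def numTails (N m : ℕ) : ℕ := Nat.card {l : RTail N // l.1.count 1 = m}

lemma card_entry_eq_numTails (N m j : ℕ) (hj : j ≤ N) :
    Nat.card {e : Seqs (N + 1) // e.1 j = m} = numTails N m := by
  obtain ⟨f⟩ := nonempty_hidden_equiv_entry N m j hj
  refine Nat.card_congr (f.symm.trans <| (listEquiv N).subtypeEquiv fun e => ?_)
  rw [listEquiv_apply, hidden_eq_count e.2, Nat.cast_inj]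

/-- Vectors `r` with only their two end entries equal to `1` have hidden entry `1`, so by rotation they
correspond to structures with `d_1 = 1`, that is `r_2 = 1`. Dropping `r_1` from such a vector leaves an
arbitrary vector on the path with one vertex less. -/
noncomputable def primitiveEquiv (N : ℕ) : {l : RTail (N + 1) // l.1.count 1 = 1} ≃ RTail N := by
  have e1 : {l : RTail (N + 1) // l.1.count 1 = 1} ≃ {e : Seqs (N + 2) // hidden (N + 2) e.1 = 1} :=
    ((listEquiv (N + 1)).subtypeEquiv fun e => by
      rw [listEquiv_apply, hidden_eq_count e.2]; norm_cast).symm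
  have e2 : {e : Seqs (N + 2) // hidden (N + 2) e.1 = 1} ≃ {e : Seqs (N + 2) // e.1 0 = 1} :=
    Classical.choice (nonempty_hidden_equiv_entry (N + 1) 1 0 (by omega))
  have e3 : {e : Seqs (N + 2) // e.1 0 = 1} ≃ {l : RTail (N + 1) // l.1.head? = some 1} :=
    (listEquiv (N + 1)).subtypeEquiv fun e => by
      have := e.2.1 1 (by omega)
      rw [listEquiv_apply, toRTail, List.range_succ_eq_map]
      simp [cont] at this ⊢
      omega
  refine ((e1.trans e2).trans e3).trans (Equiv.ofBijective
    (fun l => ⟨l.1.1.tail, ?_, by simp [l.1.2.2]⟩) ⟨?_, ?_⟩)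
  · obtain ⟨⟨l, hl, hN⟩, h⟩ := l
    cases l with
    | nil => simp at h
    | cons c l =>
      obtain rfl : c = 1 := by simpa using h
      exact (isRTail_one_iff _ _ _).1 hl.2.2
  · rintro ⟨⟨l, hl, hN⟩, h⟩ ⟨⟨l', hl', hN'⟩, h'⟩ hh
    cases l with
    | nil => simp at h
    | cons c l =>
      cases l' with
      | nil => simp at h'
      | cons c' l' =>
        obtain rfl : c = 1 := by simpa using h
        obtain rfl : c' = 1 := by simpa using h'
        simp_all
  · rintro ⟨l, hl, hN⟩
    exact ⟨⟨⟨1 :: l, ⟨one_pos, one_dvd _, (isRTail_one_iff _ _ _).1 hl⟩, by simp [hN]⟩, by simp⟩, rfl⟩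

lemma count_pos_of_length {N : ℕ} (l : RTail (N + 1)) : 0 < l.1.count 1 := by
  obtain ⟨p, hp⟩ := exists_eq_append_one l.2.1 (by intro h; have := l.2.2; simp [h] at this)
  rw [hp]
  simp

lemma RTail_zero_val (l : RTail 0) : l.1 = [] := List.length_eq_zero_iff.1 l.2.2

instance : Unique (RTail 0) where
  default := ⟨[], rfl, rfl⟩
  uniq l := Subtype.ext (RTail_zero_val l)

/-- Strong induction: of the two parts joined by `glue`, the first corresponds to a shorter list by
`primitiveEquiv`, and the second is itself shorter. -/
instance RTail_finite (N : ℕ) : Finite (RTail N) := by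
  induction N using Nat.strong_induction_on with
  | _ N ih =>
    cases N with
    | zero => infer_instance
    | succ N =>
      have hfin : Finite {l : RTail (N + 1) // ∃ k, l.1.count 1 = k + 1 ∧ True} := by
        have : ∀ ij : Finset.HasAntidiagonal.antidiagonal (N + 1),
            Finite ({l : RTail ij.1.1 // l.1.count 1 = 1} × {l : RTail ij.1.2 // True}) := by
          rintro ⟨⟨i, j⟩, hij⟩
          have hij := Finset.HasAntidiagonal.mem_antidiagonal.1 hij
          dsimp only at hij ⊢
          cases i with
          | zero =>
            have : IsEmpty {l : RTail 0 // l.1.count 1 = 1} :=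
              ⟨fun l => by have := l.2; rw [RTail_zero_val] at this; simp at this⟩
            infer_instance
          | succ i =>
            have h1 := ih i (by omega)
            have h2 := ih j (by omega)
            have := Finite.of_equiv _ (primitiveEquiv i).symm
            infer_instance
        exact Finite.of_surjective _ (glue_bijective (N + 1) fun _ => True).2
      refine Finite.of_injective (β := {l : RTail (N + 1) // ∃ k, l.1.count 1 = k + 1 ∧ True})
        (fun l => ⟨l, l.1.count 1 - 1, ?_, trivial⟩) fun a b h => congrArg Subtype.val h
      have := count_pos_of_length l
      omega

lemma card_split (N : ℕ) (p : ℕ → Prop) :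
    Nat.card {l : RTail N // ∃ k, l.1.count 1 = k + 1 ∧ p k} =
      ∑ ij ∈ Finset.HasAntidiagonal.antidiagonal N,
        numTails ij.1 1 * Nat.card {l : RTail ij.2 // p (l.1.count 1)} := by
  rw [← Nat.card_congr (Equiv.ofBijective _ (glue_bijective N p)), Nat.card_sigma,
    ← Finset.sum_coe_sort (Finset.HasAntidiagonal.antidiagonal N)
      fun ij => numTails ij.1 1 * Nat.card {l : RTail ij.2 // p (l.1.count 1)}]
  refine Finset.sum_congr rfl fun ij _ => ?_
  rw [Nat.card_prod, numTails]

/-- The generating function of the vectors `r` whose only ones are at the two ends. -/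
noncomputable def primitiveSeries : PowerSeries ℕ := PowerSeries.mk fun N => numTails N 1

/-- The generating function of all vectors `r`. -/
noncomputable def totalSeries : PowerSeries ℕ := PowerSeries.mk fun N => Nat.card (RTail N)

lemma numTails_eq_coeff (N m : ℕ) : numTails N m = PowerSeries.coeff N (primitiveSeries ^ m) := by
  induction m generalizing N with
  | zero =>
    rw [pow_zero, PowerSeries.coeff_one, numTails]
    split_ifs with h
    · subst h
      rw [Nat.card_eq_one_iff_unique]
      exact ⟨inferInstance, ⟨⟨default, rfl⟩⟩⟩
    · obtain ⟨N, rfl⟩ := Nat.exists_eq_succ_of_ne_zero h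
      have : IsEmpty {l : RTail (N + 1) // l.1.count 1 = 0} :=
        ⟨fun l => (count_pos_of_length l.1).ne' l.2⟩
      exact Nat.card_of_isEmpty
  | succ m ih =>
    rw [pow_succ', PowerSeries.coeff_mul]
    have h := card_split N fun k => k = m
    simp only [exists_eq_right] at h
    rw [numTails, h]
    refine Finset.sum_congr rfl fun ij _ => ?_
    rw [← ih, primitiveSeries, PowerSeries.coeff_mk]
    rfl

/-- A vector `r` on more than one vertex is cut after its first `1` beyond `r_1`. -/
lemma totalSeries_eq : totalSeries = 1 + primitiveSeries * totalSeries := by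
  ext N
  rw [map_add, PowerSeries.coeff_mul, PowerSeries.coeff_one]
  have h := card_split N fun _ => True
  have h2 : ∀ j, Nat.card {l : RTail j // True} = Nat.card (RTail j) := fun j =>
    Nat.card_congr (Equiv.subtypeUnivEquiv fun _ => trivial)
  simp only [h2] at h
  simp only [totalSeries, primitiveSeries, PowerSeries.coeff_mk]
  rw [← h]
  cases N with
  | zero =>
    have : IsEmpty {l : RTail 0 // ∃ k, l.1.count 1 = k + 1 ∧ True} :=
      ⟨fun l => by obtain ⟨k, hk, -⟩ := l.2; rw [RTail_zero_val] at hk; simp at hk⟩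
    rw [if_pos rfl, Nat.card_unique, Nat.card_eq_zero.2 (Or.inl this)]
  | succ N =>
    rw [if_neg (by omega), zero_add]
    refine Nat.card_congr (Equiv.subtypeUnivEquiv fun l => ⟨l.1.count 1 - 1, ?_, trivial⟩).symm
    have := count_pos_of_length l
    omega

lemma primitiveSeries_eq : primitiveSeries = PowerSeries.X * totalSeries := by
  ext N
  cases N with
  | zero =>
    have : IsEmpty {l : RTail 0 // l.1.count 1 = 1} :=
      ⟨fun l => by have := l.2; rw [RTail_zero_val] at this; simp at this⟩
    simp [primitiveSeries, numTails]
  | succ N =>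
    rw [PowerSeries.coeff_succ_X_mul, primitiveSeries, totalSeries, PowerSeries.coeff_mk,
      PowerSeries.coeff_mk, numTails]
    exact Nat.card_congr (primitiveEquiv N)

lemma primitiveSeries_quadratic :
    primitiveSeries = PowerSeries.X + primitiveSeries * primitiveSeries := by
  calc primitiveSeries = PowerSeries.X * totalSeries := primitiveSeries_eq
    _ = PowerSeries.X * (1 + primitiveSeries * totalSeries) := by rw [← totalSeries_eq]
    _ = PowerSeries.X + primitiveSeries * (PowerSeries.X * totalSeries) := by ring
    _ = PowerSeries.X + primitiveSeries * primitiveSeries := by rw [← primitiveSeries_eq]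

lemma numTails_rec (N m : ℕ) : numTails (N + 1) (m + 1) = numTails N m + numTails (N + 1) (m + 2) := by
  have h : primitiveSeries ^ (m + 1) =
      PowerSeries.X * primitiveSeries ^ m + primitiveSeries ^ (m + 2) := by
    calc primitiveSeries ^ (m + 1) = primitiveSeries ^ m * primitiveSeries := pow_succ _ _
      _ = primitiveSeries ^ m * (PowerSeries.X + primitiveSeries * primitiveSeries) := by
        rw [← primitiveSeries_quadratic]
      _ = PowerSeries.X * primitiveSeries ^ m + primitiveSeries ^ (m + 2) := by ring
  rw [numTails_eq_coeff, numTails_eq_coeff, numTails_eq_coeff, h, map_add, PowerSeries.coeff_succ_X_mul]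

lemma numTails_zero (N : ℕ) : numTails (N + 1) 0 = 0 := by
  rw [numTails_eq_coeff]
  simp [PowerSeries.coeff_one]

lemma numTails_of_lt (N m : ℕ) (h : N < m) : numTails N m = 0 := by
  have : IsEmpty {l : RTail N // l.1.count 1 = m} := ⟨fun l => by
    have h1 := List.count_le_length (a := 1) (l := l.1.1)
    rw [l.2, l.1.2.2] at h1
    omega⟩
  exact Nat.card_of_isEmpty

lemma numTails_diag (N : ℕ) : numTails N N = 1 := by
  induction N with
  | zero => rw [numTails_eq_coeff]; simp
  | succ N ih => rw [numTails_rec, ih, numTails_of_lt _ _ (by omega)]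

/-! ### Ballot numbers -/

/-- The ballot formula, cleared of denominators and with `m = N + 1 - k`. -/
lemma numTails_formula (N : ℕ) : ∀ k m, m + k = N + 1 →
    (N + 1) * numTails (N + 1) m = m * (N + k).choose N := by
  induction N with
  | zero =>
    intro k m h
    obtain ⟨rfl, rfl⟩ | ⟨rfl, rfl⟩ : (m = 0 ∧ k = 1) ∨ (m = 1 ∧ k = 0) := by omega
    · simp [numTails_zero]
    · simp [numTails_diag]
  | succ N ih =>
    intro k
    induction k with
    | zero =>
      intro m h
      obtain rfl : m = N + 2 := by omega
      rw [numTails_diag]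
      simp
    | succ k ihk =>
      intro m h
      cases m with
      | zero => simp [numTails_zero]
      | succ m =>
        have h1 := ih (k + 1) m (by omega)
        have h2 := ihk (m + 2) (by omega)
        rw [numTails_rec]
        have hp : (N + 1 + (k + 1)).choose (N + 1) =
            (N + (k + 1)).choose N + (N + 1 + k).choose (N + 1) := by
          rw [show N + 1 + (k + 1) = (N + k + 1) + 1 by ring, Nat.choose_succ_succ']
          congr 2
          ring
        have hs : (N + 1 + k).choose (N + 1) * (N + 1) = (N + (k + 1)).choose N * (k + 1) := by
          have := Nat.choose_succ_right_eq (N + k + 1) N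
          rw [show N + k + 1 - N = k + 1 by omega] at this
          rw [show N + 1 + k = N + k + 1 by ring, show N + (k + 1) = N + k + 1 by ring]
          exact this
        rw [hp]
        set u := (N + (k + 1)).choose N
        set v := (N + 1 + k).choose (N + 1)
        have hm : m + k = N := by omega
        apply Nat.eq_of_mul_eq_mul_left (Nat.succ_pos N)
        subst hm
        zify at h1 h2 hs ⊢
        linear_combination (m + k + 2 : ℤ) * h1 + (m + k + 1 : ℤ) * h2 + hs

lemma numTails_eq_ballot (N k : ℕ) (hk : k ≤ N) : numTails (N + 1) (N + 1 - k) = ballot N k := by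
  rw [ballot, ← numTails_formula N k (N + 1 - k) (by omega)]
  exact (Nat.mul_div_cancel_left _ (Nat.succ_pos N)).symm

/-! ### Comparison with `IsArithPath` -/

/-- The vector `d` as an integer sequence, extended by zeros. -/
def extend (n : ℕ) (d : Fin n → ℕ) : ℕ → ℤ := fun j => if h : j < n then (d ⟨j, h⟩ : ℤ) else 0

/-- The recurrence makes `r` equal to `r_1` times the continuant sequence, so `r_1` divides the gcd of the
entries and equals `1`. -/
lemma extend_mem_of_isArithPath {n : ℕ} {d r : Fin (n + 1) → ℕ} (h : IsArithPath (n + 1) d r) :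
    extend (n + 1) d ∈ Seqs (n + 1) := by
  obtain ⟨-, hr, hg, hd⟩ := h
  have hR : ∀ j, (∀ h : j < n + 1, (r ⟨j, h⟩ : ℤ) = r 0 * cont (extend (n + 1) d) (j + 1)) ∧
      (j = n + 1 → (0 : ℤ) = r 0 * cont (extend (n + 1) d) (j + 1)) := by
    intro j
    induction j using Nat.strong_induction_on with
    | _ j ih =>
      match j with
      | 0 => exact ⟨fun h => by simp [cont], by omega⟩
      | (j + 1) =>
        rcases Nat.lt_or_ge j (n + 1) with hj | hj
        · have h1 := (ih j (by omega)).1 hj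
          have h0 : ((if 0 < j then r ⟨j - 1, by omega⟩ else 0 : ℕ) : ℤ) =
              r 0 * cont (extend (n + 1) d) j := by
            cases j with
            | zero => simp [cont]
            | succ j => simpa using (ih j (by omega)).1 (by omega)
          have h2 := hd ⟨j, hj⟩
          have he : extend (n + 1) d j = d ⟨j, hj⟩ := by simp [extend, hj]
          have h2 := congrArg (Nat.cast : ℕ → ℤ) h2
          rw [Nat.cast_add, Nat.cast_mul, h0, h1] at h2
          rw [show j + 1 + 1 = j + 2 from rfl, cont, he]
          constructor
          · intro h
            rw [dif_pos (by exact h)] at h2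
            linarith
          · intro h
            rw [dif_neg (by simp [h]), Nat.cast_zero] at h2
            linarith
        · exact ⟨by omega, by omega⟩
  have hr0 : r 0 = 1 := by
    have : r 0 ∣ Finset.univ.gcd r := Finset.dvd_gcd fun j _ => by
      rw [← Int.natCast_dvd_natCast]
      exact ⟨_, (hR j.1).1 j.2⟩
    rw [hg] at this
    exact Nat.dvd_one.1 this
  simp only [hr0, Nat.cast_one, one_mul] at hR
  refine ⟨fun j hj => ?_, ((hR (n + 1)).2 rfl).symm, fun j hj => ?_⟩
  · rw [← (hR j).1 hj]
    exact_mod_cast hr _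
  · simp only [extend]
    rw [dif_neg (by omega)]

/-- This needs at least two vertices: on a single vertex the entry is `0`. -/
lemma entry_pos {n : ℕ} {e : ℕ → ℤ} (he : e ∈ Seqs (n + 2)) (j : ℕ) (hj : j < n + 2) : 0 < e j := by
  have h1 := he.1 j hj
  have h2 : e j * cont e (j + 1) = cont e j + cont e (j + 2) := by rw [cont]; ring
  have h3 : 0 ≤ cont e (j + 2) := by
    rcases Nat.lt_or_ge (j + 1) (n + 2) with h | h
    · exact (he.1 (j + 1) h).le
    · obtain rfl : j = n + 1 := by omega
      exact he.2.1.ge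
  have h4 : 0 < cont e j + cont e (j + 2) := by
    cases j with
    | zero => have := he.1 1 (by omega); simpa [cont] using this
    | succ j => have := he.1 j (by omega); linarith
  rw [← h2] at h4
  exact pos_of_mul_pos_left h4 h1.le

lemma isArithPath_of_extend_mem {n : ℕ} {d : Fin (n + 2) → ℕ} (he : extend (n + 2) d ∈ Seqs (n + 2)) :
    ∃ r, IsArithPath (n + 2) d r := by
  refine ⟨fun j => (cont (extend (n + 2) d) (j + 1)).toNat, fun j => ?_, fun j => ?_, ?_, fun j => ?_⟩
  · have := entry_pos he j.1 j.2
    simpa [extend] using this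
  · have := he.1 j.1 j.2
    simpa using this
  · refine Nat.dvd_one.1 ((Finset.gcd_dvd (Finset.mem_univ (0 : Fin (n + 2)))).trans ?_)
    simp [cont]
  · obtain ⟨j, hj⟩ := j
    have h1 := he.1 j hj
    have h2 : extend (n + 2) d j * cont (extend (n + 2) d) (j + 1) =
      cont (extend (n + 2) d) j + cont (extend (n + 2) d) (j + 2) := by rw [cont]; ring
    have h3 : extend (n + 2) d j = d ⟨j, hj⟩ := by simp [extend, hj]
    have h4 : (if 0 < j then (cont (extend (n + 2) d) (j - 1 + 1)).toNat else 0 : ℕ) =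
        cont (extend (n + 2) d) j := by
      cases j with
      | zero => simp [cont]
      | succ j => simpa using (he.1 j (by omega)).le
    have h5 : (if j + 1 < n + 2 then (cont (extend (n + 2) d) (j + 1 + 1)).toNat else 0 : ℕ) =
        cont (extend (n + 2) d) (j + 2) := by
      split_ifs with h
      · simpa using (he.1 (j + 1) h).le
      · obtain rfl : j = n + 1 := by omega
        exact he.2.1.symm
    dsimp only
    rw [dite_eq_ite]
    have h6 : ((cont (extend (n + 2) d) (j + 1)).toNat : ℤ) = cont (extend (n + 2) d) (j + 1) :=
      Int.toNat_of_nonneg h1.le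
    rw [h3, ← h4, ← h5, ← h6] at h2
    exact_mod_cast h2

/-- The arithmetical `d`-structures on `P_{n+2}` are the elements of `Seqs (n + 2)`. -/
noncomputable def structEquiv (n : ℕ) :
    {d : Fin (n + 2) → ℕ // ∃ r, IsArithPath (n + 2) d r} ≃ Seqs (n + 2) :=
  Equiv.ofBijective
    (fun d => ⟨extend (n + 2) d.1, by obtain ⟨r, hr⟩ := d.2; exact extend_mem_of_isArithPath hr⟩) <| by
    constructor
    · rintro ⟨d, hd⟩ ⟨d', hd'⟩ h
      apply Subtype.ext
      funext j
      have := congrFun (congrArg Subtype.val h) j.1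
      simpa [extend] using this
    · rintro ⟨e, he⟩
      have h : extend (n + 2) (fun j => (e j).toNat) = e := by
        funext j
        simp only [extend]
        split_ifs with hj
        · exact Int.toNat_of_nonneg (entry_pos he j hj).le
        · exact (he.2.2 j (by omega)).symm
      exact ⟨⟨fun j => (e j).toNat, isArithPath_of_extend_mem (by rwa [h])⟩, Subtype.ext h⟩

end ArithPath

open ArithPath

/-- For `n ≥ 2`, any position `i`, and `0 ≤ k ≤ n - 2`, the number of arithmetical
`d`-structures on `P_n` with `d_i = n - k - 1` equals the ballot number `B(n-2, k)`. -/
theorem arith_path_count_d_entry (n : ℕ) (hn : 2 ≤ n) (i : Fin n) (k : ℕ) (hk : k ≤ n - 2) :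
    Nat.card {d : Fin n → ℕ // (∃ r, IsArithPath n d r) ∧ d i = n - k - 1} =
      ballot (n - 2) k := by
  obtain ⟨N, rfl⟩ := Nat.exists_eq_add_of_le' hn
  rw [Nat.add_sub_cancel] at hk ⊢
  rw [← numTails_eq_ballot N k hk, ← card_entry_eq_numTails (N + 1) (N + 1 - k) i.1 (by omega)]
  refine Nat.card_congr ((Equiv.subtypeSubtypeEquivSubtypeInter _ _).symm.trans
    ((structEquiv N).subtypeEquiv fun d => ?_))
  have h : (structEquiv N d).1 i.1 = (d.1 i : ℤ) := by
    have : (structEquiv N d).1 = extend (N + 2) d.1 := rfl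
    rw [this]
    simp [extend]
  rw [h, Nat.cast_inj, show N + 2 - k - 1 = N + 1 - k by omega]
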